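/- For each dimension n there is a constant c_n > 0 such that the following holds: if (T^n, g) is any Riemannian metric on the n-dimensional torus and R < (1/2)·Sys(T^n, g), then there is a point x ∈ T^n such that the metric ball of radius R around x has Riemannian volume at least c_n · R^n. -/

import Mathlib

/-!
Formalization of a statement from L. Guth, "Systolic inequalities and minimal hypersurfaces"
(arXiv:0903.5299).

Since Mathlib does not have Riemannian metrics, a Riemannian metric `g` on a closed manifold
is encoded by its geodesic distance function: a (length/intrinsic) metric space structure.
Lengths of curves are computed from the distance as the total variation, which for the geodesic
distance of a Riemannian metric agrees with the Riemannian length.  The `d`-dimensional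
Riemannian volume is encoded as the `d`-dimensional Hausdorff measure (with the normalization
constant `ω_d/2^d` making it agree with the Riemannian volume on `d`-dimensional Riemannian
submanifolds).
-/

open MeasureTheory Metric Set
open scoped ENNReal

noncomputable section

/-- The length (total variation, i.e. arclength) of a path in an (extended) metric space.
For a path in a Riemannian manifold, computing it with respect to the geodesic distance
gives the Riemannian length of the path. -/
def pathLength {X : Type} [PseudoEMetricSpace X] {x y : X} (γ : Path x y) : ℝ≥0∞ :=
  eVariationOn (fun t => γ t) Set.univ

/-- A metric is a length (intrinsic) metric: the distance between two points is the infimum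
of the lengths of paths joining them.  The geodesic distance of a Riemannian metric is a
length metric. -/
def IsLengthMetric (X : Type) [PseudoEMetricSpace X] : Prop :=
  ∀ x y : X, edist x y = ⨅ γ : Path x y, pathLength γ

/-- The systole of a space: the infimum of the lengths of all non-contractible closed curves. -/
def systole (X : Type) [PseudoEMetricSpace X] : ℝ≥0∞ :=
  ⨅ (x : X) (γ : Path x x) (_ : ¬γ.Homotopic (Path.refl x)), pathLength γ

/-- The volume `ω_d = π^(d/2)/Γ(d/2+1)` of the Euclidean unit ball in dimension `d`. -/
def unitBallVolume (d : ℕ) : ℝ≥0∞ :=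
  ENNReal.ofReal (Real.pi ^ ((d : ℝ) / 2) / Real.Gamma ((d : ℝ) / 2 + 1))

/-- The `d`-dimensional Riemannian volume of a subset of a metric space: the `d`-dimensional
Hausdorff measure, normalized (à la Federer, by `ω_d/2^d`) so that it agrees with the
Riemannian volume on `d`-dimensional Riemannian manifolds and their `d`-dimensional
submanifolds. -/
def rvol (d : ℕ) {X : Type} [EMetricSpace X] [MeasurableSpace X] [BorelSpace X]
    (s : Set X) : ℝ≥0∞ :=
  (unitBallVolume d / 2 ^ d) * μH[(d : ℝ)] s

/-- The standard topological `n`-torus `(ℝ/ℤ)ⁿ`. -/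
abbrev Torus (n : ℕ) : Type := Fin n → AddCircle (1 : ℝ)

/-- Integer vector cast to a real vector. -/
def zc {n : ℕ} (v : Fin n → ℤ) : Fin n → ℝ := fun i => (v i : ℝ)

lemma lagrange_det (n : ℕ) (t : ℕ → ℝ) (ht : Function.Injective t) :
    ∃ l : ℕ → ℝ, (∑ i ∈ Finset.range (n+1), l i = 1) ∧
      ∀ A : (Fin n → ℝ) →L[ℝ] (Fin n → ℝ),
        (1 + A).det = ∑ i ∈ Finset.range (n+1), l i * (1 + t i • A).det := by
  classical
  refine ⟨fun i => (Lagrange.basis (Finset.range (n+1)) t i).eval 1, ?_, ?_⟩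
  · have := Lagrange.sum_basis (s := Finset.range (n+1)) (v := t) ht.injOn (by simp)
    have h2 := congrArg (Polynomial.eval 1) this
    simpa [Polynomial.eval_finsetSum] using h2
  · intro A
    let B : Matrix (Fin n) (Fin n) ℝ := LinearMap.toMatrix' (A : (Fin n → ℝ) →ₗ[ℝ] (Fin n → ℝ))
    let P : Polynomial ℝ :=
      ((Polynomial.X : Polynomial ℝ) • B.map Polynomial.C + (1 : Matrix (Fin n) (Fin n) ℝ).map Polynomial.C).det
    have hev : ∀ s : ℝ, P.eval s = (1 + s • A).det := by
      intro s
      have : (1 + s • A).det = (1 + s • B).det := by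
        rw [ContinuousLinearMap.det, ← LinearMap.det_toMatrix']
        congr 1
        simp [B, map_add]
      rw [this]
      simp only [P]
      rw [← Polynomial.coe_evalRingHom, RingHom.map_det]
      congr 1
      ext i j
      simp [Matrix.one_apply, add_comm]
      split_ifs <;> simp [mul_comm]
    have hdeg : P.degree < ((Finset.range (n+1)).card : WithBot ℕ) := by
      have h1 := Polynomial.natDegree_det_X_add_C_le B 1
      rw [Fintype.card_fin] at h1
      refine lt_of_le_of_lt Polynomial.degree_le_natDegree ?_
      rw [Finset.card_range]
      exact_mod_cast Nat.lt_succ_of_le h1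
    have := Lagrange.eq_interpolate (s := Finset.range (n+1)) (v := t) ht.injOn hdeg
    have h2 := congrArg (Polynomial.eval 1) this
    rw [hev, Lagrange.interpolate_apply, Polynomial.eval_finsetSum, one_smul] at h2
    rw [h2]
    refine Finset.sum_congr rfl fun i _ => ?_
    simp [hev, mul_comm]

lemma det_pos_of_small {n : ℕ} (A : (Fin n → ℝ) →L[ℝ] (Fin n → ℝ)) (h : ‖A‖ ≤ 1/2) :
    0 < (1 + A).det := by
  have hne : ∀ s ∈ Icc (0:ℝ) 1, (1 + s • A).det ≠ 0 := by
    intro s hs h0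
    have h0' : LinearMap.det ((1 + s • A : (Fin n → ℝ) →L[ℝ] (Fin n → ℝ)) : (Fin n → ℝ) →ₗ[ℝ] (Fin n → ℝ)) = 0 := h0
    have := LinearMap.bot_lt_ker_of_det_eq_zero h0'
    obtain ⟨v, hv, hv0⟩ := (Submodule.ne_bot_iff _).1 this.ne'
    have hv' : v + s • A v = 0 := by simpa using hv
    have h1 : v = - (s • A v) := eq_neg_of_add_eq_zero_left hv'
    have h2 : ‖v‖ ≤ 1/2 * ‖v‖ := by
      calc ‖v‖ = s * ‖A v‖ := by
            conv_lhs => rw [h1]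
            rw [norm_neg, norm_smul, Real.norm_of_nonneg hs.1]
        _ ≤ 1 * ‖A v‖ := by gcongr; exact hs.2
        _ ≤ 1 * (1/2 * ‖v‖) := by gcongr; exact (A.le_opNorm v).trans (by gcongr)
        _ = _ := by ring
    have : 0 < ‖v‖ := norm_pos_iff.2 hv0
    linarith
  by_contra hcon
  push Not at hcon
  have hc : ContinuousOn (fun s : ℝ => (1 + s • A).det) (Icc 0 1) := by
    apply Continuous.continuousOn
    exact ContinuousLinearMap.continuous_det.comp (by fun_prop)
  have := intermediate_value_Icc' (zero_le_one) hc
  have h0 : (0:ℝ) ∈ Icc ((1 + (1:ℝ) • A).det) ((1 + (0:ℝ) • A).det) := by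
    constructor
    · simpa using hcon
    · have : (1 + (0:ℝ) • A).det = 1 := by
        simp [ContinuousLinearMap.det]
      rw [this]; norm_num
  obtain ⟨s, hs, hs0⟩ := this h0
  exact hne s hs hs0

lemma volume_image_eq_one {n : ℕ} (F : (Fin n → ℝ) → (Fin n → ℝ)) (hF : Continuous F)
    (hb : Function.Bijective F) (hper : ∀ x v, F (x + zc v) = F x + zc v) :
    volume (F '' (Set.univ.pi fun _ : Fin n => Set.Ico (0:ℝ) 1)) = 1 := by
  classical
  set D := Set.univ.pi fun _ : Fin n => Set.Ico (0:ℝ) 1 with hD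
  have hDm : MeasurableSet D := MeasurableSet.univ_pi fun _ => measurableSet_Ico
  let b := Pi.basisFun ℝ (Fin n)
  have hmem : ∀ g ∈ Submodule.span ℤ (Set.range b), ∃ v, g = zc v := by
    intro g hg
    have := (b.mem_span_iff_repr_mem ℤ g).1 hg
    choose v hv using this
    refine ⟨v, ?_⟩
    ext i
    have := hv i
    simpa [zc, b, eq_comm] using this
  have h1 := ZSpan.isAddFundamentalDomain b (volume : Measure (Fin n → ℝ))
  have hDb : ZSpan.fundamentalDomain b = D := ZSpan.fundamentalDomain_pi_basisFun
  have hex := ZSpan.exist_unique_vadd_mem_fundamentalDomain b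
  rw [hDb] at h1 hex
  have h2 : IsAddFundamentalDomain (Submodule.span ℤ (Set.range b)) (F '' D) (volume : Measure (Fin n → ℝ)) := by
    apply IsAddFundamentalDomain.mk'
    · exact (hDm.image_of_continuousOn_injOn hF.continuousOn hb.1.injOn).nullMeasurableSet
    · intro y
      obtain ⟨x, rfl⟩ := hb.2 y
      have key : ∀ g : Submodule.span ℤ (Set.range b), g +ᵥ F x = F (g +ᵥ x) := by
        intro g
        obtain ⟨v, hv⟩ := hmem g g.2
        rw [Submodule.vadd_def, Submodule.vadd_def, hv, vadd_eq_add, vadd_eq_add, add_comm, add_comm _ x, hper]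
      obtain ⟨g, hg, hu⟩ := hex x
      refine ⟨g, ?_, ?_⟩
      · change g +ᵥ F x ∈ F '' D
        rw [key]; exact mem_image_of_mem _ hg
      · intro g' hg'
        change g' +ᵥ F x ∈ F '' D at hg'
        rw [key, hb.1.mem_set_image] at hg'
        exact hu g' hg'
  have : VAddInvariantMeasure (Submodule.span ℤ (Set.range b)) (Fin n → ℝ) volume :=
    ⟨fun c s _ => measure_preimage_add volume (c : Fin n → ℝ) s⟩
  have : MeasurableConstVAdd (Submodule.span ℤ (Set.range b)) (Fin n → ℝ) :=
    ⟨fun c => measurable_const_add (c : Fin n → ℝ)⟩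
  have := h1.measure_eq h2
  rw [← this, hD, Real.volume_pi_Ico]
  simp

lemma degree_lemma {n : ℕ} (f : (Fin n → ℝ) → (Fin n → ℝ)) (hf : ContDiff ℝ 1 f)
    (hper : ∀ x v, f (x + zc v) = f x + zc v) : ∃ x, (fderiv ℝ f x).det ≠ 0 := by
  classical
  by_contra hcon
  push Not at hcon
  set D := Set.univ.pi fun _ : Fin n => Set.Ico (0:ℝ) 1 with hD
  have hDm : MeasurableSet D := MeasurableSet.univ_pi fun _ => measurableSet_Ico
  let h : (Fin n → ℝ) → (Fin n → ℝ) := fun x => f x - x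
  have hh : ContDiff ℝ 1 h := hf.sub contDiff_id
  have hhper : ∀ x v, h (x + zc v) = h x := by
    intro x v; simp only [h, hper]; abel
  have hhd : Differentiable ℝ h := hh.differentiable one_ne_zero
  let A := fderiv ℝ h
  have hA : Continuous A := hh.continuous_fderiv one_ne_zero
  have hAper : ∀ x v, A (x + zc v) = A x := by
    intro x v
    have : fderiv ℝ (fun y => h (y + zc v)) x = fderiv ℝ h (x + zc v) := fderiv_comp_add_right _
    simp only [A]
    rw [← this]
    congr 1
    ext1 y; exact hhper y v
  obtain ⟨K, hK⟩ : ∃ K : ℝ, ∀ x ∈ Icc (0 : Fin n → ℝ) 1, ‖A x‖ ≤ K :=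
    isCompact_Icc.exists_bound_of_continuousOn hA.continuousOn
  have hK' : ∀ x, ‖A x‖ ≤ K := by
    intro x
    have : A x = A (fun i => Int.fract (x i)) := by
      rw [← hAper (fun i => Int.fract (x i)) (fun i => ⌊x i⌋)]
      congr 1
      ext i; simp only [zc, Pi.add_apply]; exact (Int.fract_add_floor _).symm
    rw [this]
    apply hK
    exact ⟨fun i => Int.fract_nonneg _, fun i => (Int.fract_lt_one _).le⟩
  have hK0 : 0 ≤ K := (norm_nonneg _).trans (hK' 0)
  have hlip : LipschitzWith ⟨K, hK0⟩ h := lipschitzWith_of_nnnorm_fderiv_le hhd (fun x => hK' x)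
  set τ : ℝ := 1 / (2 * (n + 1) * (K + 1)) with hτ
  have hτ0 : 0 < τ := by positivity
  obtain ⟨l, hl1, hl⟩ := lagrange_det n (fun i => i * τ) (by
    intro i j hij
    have := mul_right_cancel₀ hτ0.ne' hij
    exact_mod_cast this)
  -- key integral
  have key : ∀ t : ℝ, 0 ≤ t → t * K ≤ 1/2 → ∫ x in D, (1 + t • A x).det = 1 := by
    intro t ht htK
    let F : (Fin n → ℝ) → (Fin n → ℝ) := fun x => x + t • h x
    have hFc : Continuous F := continuous_id.add (hh.continuous.const_smul t)
    have hFd : ∀ x, HasFDerivAt F (1 + t • A x) x := fun x =>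
      (hasFDerivAt_id x).add ((hhd x).hasFDerivAt.const_smul t)
    have hdist : ∀ x y, ‖t • h x - t • h y‖ ≤ 1/2 * ‖x - y‖ := by
      intro x y
      rw [← smul_sub, norm_smul, Real.norm_of_nonneg ht]
      have := hlip.dist_le_mul x y
      rw [dist_eq_norm, dist_eq_norm] at this
      calc t * ‖h x - h y‖ ≤ t * (K * ‖x - y‖) := by gcongr; exact this
        _ = t * K * ‖x - y‖ := by ring
        _ ≤ _ := by gcongr
    have hinj : Function.Injective F := by
      intro x y hxy
      have h1 : x - y = -(t • h x - t • h y) := by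
        have : x + t • h x = y + t • h y := hxy
        rw [eq_neg_iff_add_eq_zero]
        rw [← sub_eq_zero] at this
        rw [← this]; abel
      have h2 := hdist x y
      rw [← norm_neg (t • h x - t • h y), ← h1] at h2
      have h3 := norm_nonneg (x - y)
      have : ‖x - y‖ = 0 := by linarith
      exact sub_eq_zero.1 (norm_eq_zero.1 this)
    have hsurj : Function.Surjective F := by
      intro y
      have hc : ContractingWith (1/2) (fun x => y - t • h x) := by
        refine ⟨by
          rw [← NNReal.coe_lt_coe]; norm_num, LipschitzWith.of_dist_le_mul fun a b => ?_⟩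
        rw [dist_eq_norm, dist_eq_norm]
        have := hdist b a
        rw [norm_sub_rev b a] at this
        have e : y - t • h a - (y - t • h b) = t • h b - t • h a := by abel
        rw [e]
        simpa using this
      refine ⟨hc.fixedPoint, ?_⟩
      have := hc.fixedPoint_isFixedPt
      have h2 : y - t • h (hc.fixedPoint) = hc.fixedPoint := this
      simp only [F]
      conv_lhs => enter [1]; rw [← h2]
      abel
    have hv := volume_image_eq_one F hFc ⟨hinj, hsurj⟩ (by
      intro x v; simp only [F, hhper]; abel)
    have hi := integral_image_eq_integral_abs_det_fderiv_smul (volume : Measure (Fin n → ℝ)) hDm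
      (fun x _ => (hFd x).hasFDerivWithinAt) hinj.injOn (fun _ => (1:ℝ))
    have hpos : ∀ x, |(1 + t • A x).det| = (1 + t • A x).det := by
      intro x
      apply abs_of_pos
      apply det_pos_of_small
      rw [norm_smul, Real.norm_of_nonneg ht]
      exact (mul_le_mul_of_nonneg_left (hK' x) ht).trans htK
    simp only [hpos, smul_eq_mul, mul_one, integral_const, measureReal_restrict_apply_univ] at hi
    rw [← hi, measureReal_def, hv]; simp
  have hint : ∀ t : ℝ, IntegrableOn (fun x => (1 + t • A x).det) D := by
    intro t
    have hc : Continuous (fun x => (1 + t • A x).det) :=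
      ContinuousLinearMap.continuous_det.comp (by fun_prop)
    have : IntegrableOn (fun x => (1 + t • A x).det) (Icc 0 1) :=
      hc.continuousOn.integrableOn_compact isCompact_Icc
    apply this.mono_set
    intro x hx
    exact ⟨fun i => (hx i trivial).1, fun i => (hx i trivial).2.le⟩
  have hfin : ∫ x in D, (1 + A x).det = 1 := by
    have e : (fun x => (1 + A x).det) = fun x => ∑ i ∈ Finset.range (n+1), l i * (1 + ((i:ℝ) * τ) • A x).det :=
      funext fun x => hl (A x)
    rw [e]
    rw [integral_finsetSum]
    · rw [← hl1]
      apply Finset.sum_congr rfl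
      intro i hi
      rw [integral_const_mul, key, mul_one]
      · positivity
      · have : (i:ℝ) ≤ n := by
          have := Finset.mem_range.1 hi
          exact_mod_cast Nat.lt_succ_iff.1 this
        rw [hτ, mul_one_div, div_mul_eq_mul_div, div_le_div_iff₀ (by positivity) (by norm_num)]
        nlinarith
    · intro i _
      exact (hint _).const_mul _
  have hz : ∀ x, (1 + A x).det = 0 := by
    intro x
    have : fderiv ℝ f x = 1 + A x := by
      have h1 : fderiv ℝ h x = fderiv ℝ f x - fderiv ℝ (fun x => x) x :=
        fderiv_fun_sub (hf.differentiable one_ne_zero x) differentiableAt_id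
      simp only [A]
      rw [h1, fderiv_fun_id]
      ext; simp
    rw [← this]; exact hcon x
  simp [hz] at hfin

/-- The covering projection. -/
def tp {n : ℕ} (y : Fin n → ℝ) : Torus n := fun i => (y i : AddCircle (1:ℝ))

lemma tp_continuous {n : ℕ} : Continuous (tp (n := n)) :=
  continuous_pi fun i => (AddCircle.continuous_mk' 1).comp (continuous_apply i)

lemma tp_add {n : ℕ} (y : Fin n → ℝ) (v : Fin n → ℤ) : tp (y + zc v) = tp y := by
  ext i
  simp only [tp, zc, Pi.add_apply, AddCircle.coe_add]
  rw [show ((v i : ℝ) : AddCircle (1:ℝ)) = 0 from ?_, add_zero]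
  rw [AddCircle.coe_eq_zero_iff]
  exact ⟨v i, by simp⟩

lemma tp_dist {n : ℕ} (x y : Fin n → ℝ) : dist (tp x) (tp y) ≤ dist x y := by
  rw [dist_pi_le_iff dist_nonneg]
  intro i
  refine le_trans ?_ (dist_le_pi_dist x y i)
  rw [dist_eq_norm, dist_eq_norm]
  simp only [tp]
  rw [← AddCircle.coe_sub]
  rw [AddCircle.norm_eq]
  simp only [inv_one, one_mul, mul_one]
  exact (round_le (x i - y i) 0).trans (by simp)

lemma exists_partition {n : ℕ} (O : Fin n → Set (Torus n)) (hO : ∀ k, IsOpen (O k))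
    (hcov : ⋃ k, O k = univ) :
    ∃ ψ : Fin n → (Fin n → ℝ) → ℝ, (∀ k, ContDiff ℝ 1 (ψ k)) ∧
      (∀ k x v, ψ k (x + zc v) = ψ k x) ∧ (∀ x, ∑ k, ψ k x = 1) ∧
      (∀ k x, tp x ∉ O k → ∀ᶠ y in nhds x, ψ k y = 0) := by
  obtain ⟨g, hg⟩ := PartitionOfUnity.exists_isSubordinate (X := Torus n) isClosed_univ O hO hcov.ge
  have hδ : ∀ k, ∃ δ, 0 < δ ∧ cthickening δ (tsupport (g k)) ⊆ O k := fun k =>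
    (isClosed_tsupport _).isCompact.exists_cthickening_subset_open (hO k) (hg k)
  choose δ hδ0 hδ using hδ
  obtain ⟨d, hdk, hd0⟩ : ∃ d : ℝ, (∀ k, d ≤ δ k) ∧ 0 < d := by
    have h1 : ∀ k, ∀ᶠ d in nhdsWithin (0:ℝ) (Ioi 0), d ≤ δ k := fun k => by
      filter_upwards [Ioc_mem_nhdsGT (hδ0 k)] with d hd using hd.2
    have h2 : ∀ᶠ d in nhdsWithin (0:ℝ) (Ioi 0), 0 < d := by
      filter_upwards [self_mem_nhdsWithin] with d hd using hd
    exact ((Filter.eventually_all.2 h1).and h2).exists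
  let φ : ContDiffBump (0 : Fin n → ℝ) := ⟨d / 2, d, by linarith, by linarith⟩
  let G : Fin n → (Fin n → ℝ) → ℝ := fun k x => g k (tp x)
  have hGc : ∀ k, Continuous (G k) := fun k => (g k).continuous.comp tp_continuous
  let ψ : Fin n → (Fin n → ℝ) → ℝ := fun k =>
    convolution (φ.normed volume) (G k) (ContinuousLinearMap.lsmul ℝ ℝ) volume
  have hψe : ∀ k x, ψ k x = ∫ t, φ.normed volume t * G k (x - t) := by
    intro k x
    simp only [ψ, convolution_def, ContinuousLinearMap.lsmul_apply, smul_eq_mul]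
  refine ⟨ψ, ?_, ?_, ?_, ?_⟩
  · intro k
    have := HasCompactSupport.contDiff_convolution_left (𝕜 := ℝ) (μ := (volume : Measure (Fin n → ℝ)))
      (ContinuousLinearMap.lsmul ℝ ℝ) (n := 1) (φ.hasCompactSupport_normed (μ := volume)) φ.contDiff_normed
      (hGc k).locallyIntegrable
    exact_mod_cast this
  · intro k x v
    rw [hψe, hψe]
    congr 1
    ext t
    have : G k (x + zc v - t) = G k (x - t) := by
      simp only [G]
      rw [add_sub_right_comm, tp_add]
    rw [this]
  · intro x
    simp only [hψe]
    rw [← integral_finsetSum]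
    · have : ∀ t, ∑ k, φ.normed volume t * G k (x - t) = φ.normed volume t := by
        intro t
        rw [← Finset.mul_sum]
        have := g.sum_eq_one (mem_univ (tp (x - t)))
        rw [finsum_eq_sum_of_fintype] at this
        simp only [G]
        rw [this, mul_one]
      simp only [this]
      exact φ.integral_normed
    · intro k _
      apply Continuous.integrable_of_hasCompactSupport
      · exact φ.continuous_normed.mul ((hGc k).comp (by fun_prop))
      · exact φ.hasCompactSupport_normed.mul_right
  · intro k x hx
    have hx' : tp x ∉ cthickening d (tsupport (g k)) := fun h => hx (hδ k (cthickening_mono (hdk k) _ h))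
    have : ∀ᶠ y in nhds x, tp y ∉ cthickening d (tsupport (g k)) :=
      tp_continuous.continuousAt.eventually (isClosed_cthickening.isOpen_compl.mem_nhds hx')
    filter_upwards [this] with y hy
    rw [hψe]
    apply integral_eq_zero_of_ae
    filter_upwards with t
    by_contra hne
    obtain ⟨h1, h2⟩ := mul_ne_zero_iff.1 hne
    have ht : t ∈ ball (0 : Fin n → ℝ) d := by
      have : t ∈ Function.support (φ.normed volume) := h1
      rwa [φ.support_normed_eq] at this
    apply hy
    refine mem_cthickening_of_dist_le (tp y) (tp (y - t)) d _ (subset_tsupport _ h2) ?_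
    refine (tp_dist _ _).trans ?_
    rw [dist_eq_norm, sub_sub_cancel]
    rw [mem_ball_zero_iff] at ht
    exact ht.le

lemma no_cover {n : ℕ} (O : Fin n → Set (Torus n)) (hO : ∀ k, IsOpen (O k))
    (hcov : ⋃ k, O k = univ) (s : Fin n → (Fin n → ℝ) → (Fin n → ℤ))
    (hs : ∀ k y v, tp y ∈ O k → s k (y + zc v) = s k y + v)
    (hloc : ∀ k y, tp y ∈ O k → ∀ᶠ y' in nhds y, s k y' = s k y) : False := by
  obtain ⟨ψ, hψ, hψp, hψ1, hψ0⟩ := exists_partition O hO hcov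
  let f : (Fin n → ℝ) → (Fin n → ℝ) := fun y => ∑ k, ψ k y • zc (s k y)
  have hfl : ∀ y, ∃ c : Fin n → Fin n → ℝ, f =ᶠ[nhds y] fun y' => ∑ k, ψ k y' • c k := by
    intro y
    refine ⟨fun k => zc (s k y), ?_⟩
    have : ∀ k, ∀ᶠ y' in nhds y, ψ k y' • zc (s k y') = ψ k y' • zc (s k y) := by
      intro k
      by_cases h : tp y ∈ O k
      · filter_upwards [hloc k y h] with y' hy'
        rw [hy']
      · filter_upwards [hψ0 k y h] with y' hy'
        rw [hy', zero_smul, zero_smul]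
    filter_upwards [Filter.eventually_all.2 this] with y' hy'
    exact Finset.sum_congr rfl fun k _ => hy' k
  have hψd : ∀ k y, HasFDerivAt (ψ k) (fderiv ℝ (ψ k) y) y := fun k y =>
    ((hψ k).differentiable one_ne_zero y).hasFDerivAt
  have hfC : ContDiff ℝ 1 f := by
    rw [contDiff_iff_contDiffAt]
    intro y
    obtain ⟨c, hc⟩ := hfl y
    refine ContDiffAt.congr_of_eventuallyEq ?_ hc
    exact (ContDiff.sum fun k _ => (hψ k).smul contDiff_const).contDiffAt
  have hfp : ∀ x v, f (x + zc v) = f x + zc v := by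
    intro x v
    have : ∀ k, ψ k (x + zc v) • zc (s k (x + zc v)) = ψ k x • zc (s k x) + ψ k x • zc v := by
      intro k
      rw [hψp]
      by_cases h : tp x ∈ O k
      · rw [hs k x v h, ← smul_add]
        congr 1
        ext i; simp [zc]
      · rw [(hψ0 k x h).self_of_nhds]; simp
    simp only [f, this]
    rw [Finset.sum_add_distrib, ← Finset.sum_smul, hψ1, one_smul]
  obtain ⟨x, hx⟩ := degree_lemma f hfC hfp
  apply hx
  obtain ⟨c, hc⟩ := hfl x
  have hd : HasFDerivAt f (∑ k, (fderiv ℝ (ψ k) x).smulRight (c k)) x := by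
    refine HasFDerivAt.congr_of_eventuallyEq ?_ hc
    exact HasFDerivAt.fun_sum fun k _ => (hψd k x).smul_const (c k)
  rw [hd.fderiv]
  have hsum : ∑ k, fderiv ℝ (ψ k) x = 0 := by
    have h1 : HasFDerivAt (fun y => ∑ k, ψ k y) (∑ k, fderiv ℝ (ψ k) x) x :=
      HasFDerivAt.fun_sum fun k _ => hψd k x
    have h2 : (fun y => ∑ k, ψ k y) = fun _ => 1 := funext hψ1
    rw [h2] at h1
    exact h1.unique (hasFDerivAt_const _ _)
  let T : (Fin n → ℝ) →ₗ[ℝ] (Fin n → ℝ) := LinearMap.pi fun k => (fderiv ℝ (ψ k) x : (Fin n → ℝ) →ₗ[ℝ] ℝ)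
  have hTs : ∀ w, ∑ k, T w k = 0 := by
    intro w
    have := congrArg (fun L => L w) hsum
    simpa [T] using this
  have hn0 : n ≠ 0 := by
    rintro rfl
    have := hψ1 x
    simp at this
  have hTns : ¬ Function.Surjective T := by
    intro hsur
    obtain ⟨w, hw⟩ := hsur (fun _ => 1)
    have := hTs w
    rw [hw] at this
    simp at this
    exact hn0 this
  have hTni : ¬ Function.Injective T := fun h => hTns (LinearMap.injective_iff_surjective.1 h)
  have hker : ∃ w, w ≠ 0 ∧ T w = 0 := by
    by_contra hcon
    push Not at hcon
    apply hTni
    rw [injective_iff_map_eq_zero]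
    intro a ha
    by_contra h0
    exact hcon a h0 ha
  obtain ⟨w, hw0, hw⟩ := hker
  rw [ContinuousLinearMap.det]
  by_contra hdet
  have hinj : LinearMap.ker ((∑ k, (fderiv ℝ (ψ k) x).smulRight (c k) : (Fin n → ℝ) →L[ℝ] (Fin n → ℝ)) : (Fin n → ℝ) →ₗ[ℝ] (Fin n → ℝ)) = ⊥ := by
    by_contra hk
    exact hdet (LinearMap.det_eq_zero_iff_ker_ne_bot.2 hk)
  rw [LinearMap.ker_eq_bot'] at hinj
  apply hw0
  apply hinj
  have : ∀ k, fderiv ℝ (ψ k) x w = 0 := fun k => congrFun hw k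
  simp [this]

lemma coarea {M : Type} [MetricSpace M] [MeasurableSpace M] [BorelSpace M] (n : ℕ) (A : Set M)
    (f : M → ℝ) (hf : LipschitzWith 1 f) (hA : μH[((n+1 : ℕ) : ℝ)] A ≠ ⊤) (a b : ℝ) (hab : a < b) :
    ∃ t ∈ Ioo a b, μH[(n : ℝ)] (A ∩ f ⁻¹' {t}) ≤ μH[((n+1 : ℕ) : ℝ)] A / ENNReal.ofReal (b - a) := by
  set m := μH[((n+1 : ℕ) : ℝ)] A with hm
  let r : ℕ → ℝ≥0∞ := fun j => ((j : ℝ≥0∞) + 1)⁻¹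
  have hr0 : ∀ j, 0 < r j := fun j => by simp [r]
  have hr : Filter.Tendsto r Filter.atTop (nhds 0) := by
    have := (Filter.tendsto_add_atTop_iff_nat 1).2 ENNReal.tendsto_inv_nat_nhds_zero
    refine this.congr fun j => by simp [r]
  have hex : ∀ j, ∃ t : ℕ → Set M, A ⊆ ⋃ i, t i ∧ (∀ i, ediam (t i) ≤ r j) ∧
      ∑' i, ⨆ (_ : (t i).Nonempty), ediam (t i) ^ ((n+1 : ℕ) : ℝ) < m + r j := by
    intro j
    have h1 : (⨅ (t : ℕ → Set M) (_ : A ⊆ ⋃ i, t i) (_ : ∀ i, ediam (t i) ≤ r j),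
        ∑' i, ⨆ (_ : (t i).Nonempty), ediam (t i) ^ ((n+1 : ℕ) : ℝ)) ≤ m := by
      rw [hm, Measure.hausdorffMeasure_apply]
      exact le_iSup₂_of_le (r j) (hr0 j) le_rfl
    have h2 := lt_of_le_of_lt h1 (ENNReal.lt_add_right hA (hr0 j).ne')
    simp only [iInf_lt_iff] at h2
    obtain ⟨t, ht1, ht2, ht3⟩ := h2
    exact ⟨t, ht1, ht2, ht3⟩
  choose E hE1 hE2 hE3 using hex
  let S : ℕ → ℕ → Set ℝ := fun j i => closure (f '' E j i)
  have hS : ∀ j i, MeasurableSet (S j i) := fun j i => isClosed_closure.measurableSet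
  let g : ℕ → ℝ → ℝ≥0∞ := fun j t => ∑' i, (S j i).indicator (fun _ => ediam (E j i) ^ (n : ℝ)) t
  have hg : ∀ j, Measurable (g j) := fun j =>
    Measurable.ennreal_tsum fun i => measurable_const.indicator (hS j i)
  have hgi : ∀ j, ∫⁻ t, g j t ≤ m + r j := by
    intro j
    simp only [g]
    rw [lintegral_tsum fun i => (measurable_const.indicator (hS j i)).aemeasurable]
    refine le_trans (ENNReal.tsum_le_tsum fun i => ?_) (hE3 j).le
    rw [lintegral_indicator_const (hS j i)]
    rcases (E j i).eq_empty_or_nonempty with h | h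
    · simp [S, h]
    · rw [iSup_pos h]
      have h1 : volume (S j i) ≤ ediam (E j i) := by
        refine (Real.volume_le_diam _).trans ?_
        simp only [S, ediam_closure]
        simpa using hf.ediam_image_le (E j i)
      calc _ ≤ ediam (E j i) ^ (n:ℝ) * ediam (E j i) := by gcongr
        _ = _ := by rw [ENNReal.rpow_natCast, ENNReal.rpow_natCast, pow_succ]
  let H : ℝ → ℝ≥0∞ := fun t => Filter.liminf (fun j => g j t) Filter.atTop
  have hHm : Measurable H := Measurable.liminf hg
  have hHi : ∫⁻ t, H t ≤ m := by
    refine (lintegral_liminf_le hg).trans ?_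
    have h1 : Filter.Tendsto (fun j => m + r j) Filter.atTop (nhds (m + 0)) :=
      tendsto_const_nhds.add hr
    rw [add_zero] at h1
    rw [← h1.liminf_eq]
    exact Filter.liminf_le_liminf (Filter.Eventually.of_forall hgi)
  have hHle : ∀ t, μH[(n:ℝ)] (A ∩ f ⁻¹' {t}) ≤ H t := by
    intro t
    have := Measure.hausdorffMeasure_le_liminf_tsum (ι := fun j => {i // t ∈ S j i}) (n:ℝ)
      (A ∩ f ⁻¹' {t}) (l := Filter.atTop) r hr (fun j i => E j i)
      (Filter.Eventually.of_forall fun j i => hE2 j i)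
      (Filter.Eventually.of_forall fun j x hx => by
        obtain ⟨i, hi⟩ := mem_iUnion.1 (hE1 j hx.1)
        have : t ∈ S j i := subset_closure ⟨x, hi, hx.2⟩
        exact mem_iUnion.2 ⟨⟨i, this⟩, hi⟩)
    refine this.trans (le_of_eq ?_)
    simp only [H]
    congr 1
    ext1 j
    have h2 := tsum_subtype {i | t ∈ S j i} (fun i => ediam (E j i) ^ (n:ℝ))
    refine Eq.trans h2 ?_
    simp only [g]
    congr 1
  have hv : volume (Ioo a b) = ENNReal.ofReal (b - a) := Real.volume_Ioo
  obtain ⟨t, ht, htle⟩ := exists_le_setLAverage (μ := volume) (s := Ioo a b) (f := H)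
    (by rw [hv]; simpa using hab) (by rw [hv]; simp) hHm.aemeasurable
  refine ⟨t, ht, (hHle t).trans (htle.trans ?_)⟩
  rw [setLAverage_eq, hv]
  gcongr
  exact (setLIntegral_le_lintegral _ _).trans hHi

/-- `W` separates `Z` into pieces of size `R`. -/
def GoodSep {M : Type} [MetricSpace M] (Z : Set M) (R : ℝ) (W : Set M) : Prop :=
  W ⊆ Z ∧ IsClosed W ∧ ∃ 𝒰 : Set (Set M),
    (∀ U ∈ 𝒰, (∃ O, IsOpen O ∧ U = Z ∩ O) ∧ ∃ x, U ⊆ ball x R) ∧ 𝒰.PairwiseDisjoint id ∧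
    Z \ W ⊆ ⋃₀ 𝒰

lemma GoodSep.replace {M : Type} [MetricSpace M] {Z : Set M} {R : ℝ} {W : Set M} (hZ : IsClosed Z)
    (h : GoodSep Z R W) (x : M) {r : ℝ} (hr : r ≤ R) :
    GoodSep Z R ((W \ ball x r) ∪ (Z ∩ sphere x r)) := by
  obtain ⟨h1, h2, 𝒰, h3, h4, h5⟩ := h
  refine ⟨union_subset (sdiff_subset.trans h1) inter_subset_left,
    (h2.sdiff isOpen_ball).union (hZ.inter isClosed_sphere), 
    insert (Z ∩ ball x r) ((fun U => U \ closedBall x r) '' 𝒰), ?_, ?_, ?_⟩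
  · rintro U (rfl | ⟨U, hU, rfl⟩)
    · exact ⟨⟨_, isOpen_ball, rfl⟩, x, inter_subset_right.trans (ball_subset_ball hr)⟩
    · obtain ⟨⟨O, hO, rfl⟩, y, hy⟩ := h3 U hU
      refine ⟨⟨O \ closedBall x r, hO.sdiff isClosed_closedBall, ?_⟩, y, sdiff_subset.trans hy⟩
      change (Z ∩ O) \ closedBall x r = _
      rw [inter_sdiff_assoc]
  · have hd : ∀ U : Set M, Disjoint (Z ∩ ball x r) (U \ closedBall x r) := by
      intro U
      rw [Set.disjoint_left]
      rintro z ⟨_, hz⟩ ⟨_, hz'⟩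
      exact hz' (ball_subset_closedBall hz)
    rintro _ (rfl | ⟨U, hU, rfl⟩) _ (rfl | ⟨U', hU', rfl⟩) hne
    · exact (hne rfl).elim
    · exact hd _
    · exact (hd _).symm
    · have : U ≠ U' := by rintro rfl; exact hne rfl
      exact (h4 hU hU' this).mono sdiff_subset sdiff_subset
  · rintro z ⟨hz, hzn⟩
    rcases lt_trichotomy (dist z x) r with hlt | heq | hgt
    · exact ⟨_, mem_insert _ _, hz, hlt⟩
    · exact (hzn (Or.inr ⟨hz, heq⟩)).elim
    · have hzW : z ∉ W := fun hW => hzn (Or.inl ⟨hW, by simpa using hgt.le⟩)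
      obtain ⟨U, hU, hzU⟩ := h5 ⟨hz, hzW⟩
      exact ⟨_, mem_insert_of_mem _ ⟨U, hU, rfl⟩, hzU, by simpa using hgt⟩

theorem cover_thm (n : ℕ) : ∃ ε : ℝ, 0 < ε ∧ ∀ (M : Type) [MetricSpace M] [MeasurableSpace M]
    [BorelSpace M] (Z : Set M) (R : ℝ), 0 < R → IsCompact Z →
    (∀ x, μH[(n:ℝ)] (Z ∩ ball x R) ≤ ENNReal.ofReal (ε * R ^ n)) →
    ∃ V : Fin n → Set (Set M), (∀ k, ∀ U ∈ V k, IsOpen U ∧ ∀ x ∈ U, ∀ y ∈ U, dist x y ≤ 3 * R) ∧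
      (∀ k, (V k).PairwiseDisjoint id) ∧ Z ⊆ ⋃ k, ⋃₀ V k := by
  induction n with
  | zero =>
    refine ⟨1/2, by norm_num, ?_⟩
    intro M _ _ _ Z R hR hZ h
    refine ⟨fun _ => ∅, by simp, by simp, ?_⟩
    intro z hz
    exfalso
    have h1 := h z
    have h2 : μH[((0:ℕ):ℝ)] {z} ≤ μH[((0:ℕ):ℝ)] (Z ∩ ball z R) :=
      measure_mono (by simpa using ⟨hz, hR⟩)
    rw [Nat.cast_zero, Measure.hausdorffMeasure_zero_singleton] at h2
    rw [Nat.cast_zero] at h1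
    have h3 := h2.trans h1
    rw [ENNReal.one_le_ofReal] at h3
    norm_num at h3
  | succ n ih =>
    obtain ⟨ε, hε, ih⟩ := ih
    refine ⟨ε / (4 * 2 ^ n), by positivity, ?_⟩
    intro M _ _ _ Z R hR hZ h
    set δ : ℝ := ε / 2 * (R / 2) ^ n with hδ
    have hδ0 : 0 < δ := by positivity
    have slice : ∀ x, ∃ r ∈ Ioo (R/2) R, μH[(n:ℝ)] (Z ∩ sphere x r) ≤ ENNReal.ofReal δ := by
      intro x
      obtain ⟨r, hr, hle⟩ := coarea n (Z ∩ ball x R) (fun y => dist y x) (LipschitzWith.dist_left x)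
        (ne_top_of_le_ne_top ENNReal.ofReal_ne_top (h x)) (R/2) R (by linarith)
      refine ⟨r, hr, ?_⟩
      have : Z ∩ sphere x r ⊆ Z ∩ ball x R ∩ (fun y => dist y x) ⁻¹' {r} := by
        rintro z ⟨hz, hzr⟩
        have hzr' : dist z x = r := hzr
        exact ⟨⟨hz, by rw [mem_ball, hzr']; exact hr.2⟩, hzr'⟩
      refine (measure_mono this).trans (hle.trans ?_)
      refine (ENNReal.div_le_div_right (h x) _).trans ?_
      rw [← ENNReal.ofReal_div_of_pos (by linarith)]
      apply ENNReal.ofReal_le_ofReal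
      apply le_of_eq
      rw [hδ, div_pow, show R - R / 2 = R / 2 by ring]
      field_simp
      ring
    have hfin : ∀ F : Finset M, ∃ W, GoodSep Z R W ∧ μH[(n:ℝ)] (W ∩ ⋃ x ∈ F, ball x (R/2)) ≠ ⊤ := by
      classical
      intro F
      induction F using Finset.induction_on with
      | empty =>
        refine ⟨Z, ⟨subset_rfl, hZ.isClosed, ∅, by simp, by simp, by simp⟩, by simp⟩
      | insert x F _ ihF =>
        obtain ⟨W, hW, hWf⟩ := ihF
        obtain ⟨r, hr, hrle⟩ := slice x
        refine ⟨_, hW.replace hZ.isClosed x hr.2.le, ?_⟩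
        have hsub : ((W \ ball x r) ∪ (Z ∩ sphere x r)) ∩ (⋃ y ∈ insert x F, ball y (R/2)) ⊆
            (W ∩ ⋃ y ∈ F, ball y (R/2)) ∪ (Z ∩ sphere x r) := by
          rintro z ⟨hz | hz, hz2⟩
          · left
            refine ⟨hz.1, ?_⟩
            rw [Finset.set_biUnion_insert] at hz2
            rcases hz2 with hz2 | hz2
            · exact (hz.2 (ball_subset_ball hr.1.le hz2)).elim
            · exact hz2
          · exact Or.inr hz
        refine ne_top_of_le_ne_top ?_ ((measure_mono hsub).trans (measure_union_le _ _))
        exact ENNReal.add_ne_top.2 ⟨hWf, ne_top_of_le_ne_top ENNReal.ofReal_ne_top hrle⟩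
    obtain ⟨W₀, hW₀, hW₀f⟩ : ∃ W, GoodSep Z R W ∧ μH[(n:ℝ)] W ≠ ⊤ := by
      obtain ⟨F, -, hFc⟩ := hZ.elim_nhds_subcover (fun x => ball x (R/2))
        (fun x _ => ball_mem_nhds x (by linarith))
      obtain ⟨W, hW, hWf⟩ := hfin F
      refine ⟨W, hW, ?_⟩
      rwa [inter_eq_left.2 (hW.1.trans hFc)] at hWf
    obtain ⟨W, hW, hWf, hmin⟩ : ∃ W, GoodSep Z R W ∧ μH[(n:ℝ)] W ≠ ⊤ ∧
        ∀ W', GoodSep Z R W' → μH[(n:ℝ)] W ≤ μH[(n:ℝ)] W' + ENNReal.ofReal δ := by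
      set m := ⨅ (W : Set M) (_ : GoodSep Z R W), μH[(n:ℝ)] W with hm
      have hmt : m ≠ ⊤ := ne_top_of_le_ne_top hW₀f (iInf₂_le W₀ hW₀)
      have hlt : m < m + ENNReal.ofReal δ := ENNReal.lt_add_right hmt (by simpa using hδ0)
      have hlt' := hlt
      conv_lhs at hlt' => rw [hm]
      simp only [iInf_lt_iff] at hlt'
      obtain ⟨W, hW, hWl⟩ := hlt'
      refine ⟨W, hW, hWl.ne_top, fun W' hW' => hWl.le.trans ?_⟩
      gcongr
      exact iInf₂_le W' hW'
    have hWc : IsCompact W := hZ.of_isClosed_subset hW.2.1 hW.1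
    obtain ⟨V, hV1, hV2, hV3⟩ := ih M W (R/2) (by linarith) hWc (by
      intro x
      obtain ⟨r, hr, hrle⟩ := slice x
      have h1 := hmin _ (hW.replace hZ.isClosed x hr.2.le)
      have h2 := h1.trans (add_le_add_left (measure_union_le _ _) _)
      rw [← measure_inter_add_sdiff W (measurableSet_ball (x := x) (ε := r))] at h2
      have hft : μH[(n:ℝ)] (W \ ball x r) ≠ ⊤ := ne_top_of_le_ne_top hWf (measure_mono sdiff_subset)
      have h3 : μH[(n:ℝ)] (W ∩ ball x r) ≤ μH[(n:ℝ)] (Z ∩ sphere x r) + ENNReal.ofReal δ := by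
        rw [add_comm, add_assoc] at h2
        exact (ENNReal.add_le_add_iff_left hft).1 h2
      calc μH[(n:ℝ)] (W ∩ ball x (R/2)) ≤ μH[(n:ℝ)] (W ∩ ball x r) :=
            measure_mono (inter_subset_inter_right _ (ball_subset_ball hr.1.le))
        _ ≤ _ := h3
        _ ≤ ENNReal.ofReal δ + ENNReal.ofReal δ := by gcongr
        _ = ENNReal.ofReal (ε * (R/2)^n) := by
          rw [← ENNReal.ofReal_add hδ0.le hδ0.le]
          congr 1
          rw [hδ]; ring)
    obtain ⟨-, -, 𝒰, hU1, hU2, hU3⟩ := hW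
    let ext : Set M → Set M := fun U => {x | infEDist x U < infEDist x (Z \ U)} ∩ thickening (R/2) U
    have hext : ∀ U ∈ 𝒰, U ⊆ ext U := by
      intro U hU x hx
      obtain ⟨⟨O, hO, hUO⟩, -⟩ := hU1 U hU
      refine ⟨?_, self_subset_thickening (by linarith) _ hx⟩
      change infEDist x U < infEDist x (Z \ U)
      rw [infEDist_zero_of_mem hx, infEDist_pos_iff_notMem_closure]
      have : closure (Z \ U) ⊆ Oᶜ := by
        apply closure_minimal _ hO.isClosed_compl
        rintro z ⟨hz, hzU⟩ hzO
        exact hzU (hUO ▸ ⟨hz, hzO⟩)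
      intro hc
      exact this hc (hUO ▸ hx : x ∈ Z ∩ O).2
    refine ⟨Fin.cons (ext '' 𝒰) V, ?_, ?_, ?_⟩
    · intro k
      refine Fin.cases ?_ (fun k => ?_) k
      · rintro _ ⟨U, hU, rfl⟩
        refine ⟨(isOpen_lt continuous_infEDist continuous_infEDist).inter isOpen_thickening, ?_⟩
        rintro x ⟨-, hx⟩ y ⟨-, hy⟩
        obtain ⟨-, c, hc⟩ := hU1 U hU
        obtain ⟨u, hu, hxu⟩ := mem_thickening_iff.1 hx
        obtain ⟨w, hw, hyw⟩ := mem_thickening_iff.1 hy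
        have h1 := hc hu
        have h2 := hc hw
        rw [mem_ball] at h1 h2
        have h3 := dist_triangle4 x u w y
        have h4 := dist_triangle_right u w c
        rw [dist_comm w y] at h3
        linarith
      · intro U hU
        obtain ⟨h1, h2⟩ := hV1 k U hU
        exact ⟨h1, fun x hx y hy => (h2 x hx y hy).trans (by linarith)⟩
    · intro k
      refine Fin.cases ?_ (fun k => ?_) k
      · rintro _ ⟨U, hU, rfl⟩ _ ⟨U', hU', rfl⟩ hne
        have hUU' : U ≠ U' := by rintro rfl; exact hne rfl
        have hd : Disjoint U U' := hU2 hU hU' hUU'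
        obtain ⟨⟨O, -, hO⟩, -⟩ := hU1 U hU
        obtain ⟨⟨O', -, hO'⟩, -⟩ := hU1 U' hU'
        have s1 : U' ⊆ Z \ U := fun z hz => ⟨(hO' ▸ hz : z ∈ Z ∩ O').1, fun hz' => Set.disjoint_left.1 hd hz' hz⟩
        have s2 : U ⊆ Z \ U' := fun z hz => ⟨(hO ▸ hz : z ∈ Z ∩ O).1, fun hz' => Set.disjoint_left.1 hd hz hz'⟩
        change Disjoint (ext U) (ext U')
        rw [Set.disjoint_left]
        rintro x ⟨hx, -⟩ ⟨hx', -⟩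
        have e1 : infEDist x U < infEDist x (Z \ U) := hx
        have e2 : infEDist x U' < infEDist x (Z \ U') := hx'
        have e3 := infEDist_anti (x := x) s1
        have e4 := infEDist_anti (x := x) s2
        exact absurd (e1.trans_le (e3.trans (e2.le.trans e4))) (lt_irrefl _)
      · exact hV2 k
    · intro z hz
      by_cases hzW : z ∈ W
      · obtain ⟨k, hk⟩ := mem_iUnion.1 (hV3 hzW)
        exact mem_iUnion.2 ⟨k.succ, by simpa using hk⟩
      · obtain ⟨U, hU, hzU⟩ := hU3 ⟨hz, hzW⟩
        exact mem_iUnion.2 ⟨0, ext U, by simpa using ⟨U, hU, rfl⟩, hext U hU hzU⟩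

lemma pathLength_symm {X : Type} [PseudoEMetricSpace X] {x y : X} (γ : Path x y) :
    pathLength γ.symm ≤ pathLength γ := by
  unfold pathLength
  exact eVariationOn.comp_le_of_antitoneOn (fun t => γ t) unitInterval.symm
    (fun a _ b _ h => unitInterval.symm_le_symm.2 h) (mapsTo_univ _ _)

lemma pathLength_trans {X : Type} [PseudoEMetricSpace X] {x y z : X} (γ : Path x y) (γ' : Path y z) :
    pathLength (γ.trans γ') ≤ pathLength γ + pathLength γ' := by
  unfold pathLength
  let h : unitInterval := ⟨1/2, by norm_num, by norm_num⟩
  have hu : (univ : Set unitInterval) = Iic h ∪ Ici h := by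
    ext t; simpa using le_total t h
  rw [hu, eVariationOn.union _ isGreatest_Iic isLeast_Ici]
  gcongr
  · have : EqOn (fun t => γ.trans γ' t) ((fun t => γ t) ∘ (fun t : unitInterval => projIcc (0:ℝ) 1 zero_le_one (2 * t))) (Iic h) := by
      intro t ht
      have ht' : (t:ℝ) ≤ 1/2 := ht
      simp only [Path.trans_apply, Function.comp]
      rw [dif_pos ht']
      congr 1
      rw [projIcc_of_mem]
    rw [eVariationOn.congr this, ← hu]
    refine eVariationOn.comp_le_of_monotoneOn (fun t => γ t) _ ?_ (mapsTo_univ _ _)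
    intro a _ b _ hab
    apply monotone_projIcc
    have : (a:ℝ) ≤ b := hab
    linarith
  · have : EqOn (fun t => γ.trans γ' t) ((fun t => γ' t) ∘ (fun t : unitInterval => projIcc (0:ℝ) 1 zero_le_one (2 * t - 1))) (Ici h) := by
      intro t ht
      have ht' : 1/2 ≤ (t:ℝ) := ht
      simp only [Path.trans_apply, Function.comp]
      split_ifs with h2
      · have h3 : (t:ℝ) = 1/2 := le_antisymm h2 ht'
        have e1 : (⟨2 * (t:ℝ), by constructor <;> linarith⟩ : unitInterval) = 1 := by
          ext; simp [h3]
        have e2 : projIcc (0:ℝ) 1 zero_le_one (2 * t - 1) = 0 := by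
          rw [h3]; norm_num [projIcc_left]
        rw [e2, γ'.source]
        exact (congrArg γ e1).trans γ.target
      · congr 1
        rw [projIcc_of_mem]
    rw [eVariationOn.congr this, ← hu]
    refine eVariationOn.comp_le_of_monotoneOn (fun t => γ' t) _ ?_ (mapsTo_univ _ _)
    intro a _ b _ hab
    apply monotone_projIcc
    have : (a:ℝ) ≤ b := hab
    linarith

lemma tp_eq_iff {n : ℕ} {x y : Fin n → ℝ} (h : tp x = tp y) : ∃ v, x = y + zc v := by
  have : ∀ i, ∃ v : ℤ, x i = y i + v := by
    intro i
    have h1 : ((x i : ℝ) : AddCircle (1:ℝ)) = (y i : ℝ) := congrFun h i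
    have h2 : ((x i - y i : ℝ) : AddCircle (1:ℝ)) = 0 := by
      rw [AddCircle.coe_sub, h1, sub_self]
    rw [AddCircle.coe_eq_zero_iff] at h2
    obtain ⟨v, hv⟩ := h2
    refine ⟨v, ?_⟩
    simp at hv
    linarith
  choose v hv using this
  exact ⟨v, funext hv⟩

lemma tp_surj {n : ℕ} (z : Torus n) : ∃ y, tp y = z := by
  have : ∀ i, ∃ y : ℝ, (y : AddCircle (1:ℝ)) = z i := fun i => QuotientAddGroup.mk_surjective (z i)
  choose y hy using this
  exact ⟨y, funext hy⟩

lemma tp_lift {n : ℕ} (γ : C(unitInterval, Torus n)) (y : Fin n → ℝ) (h : γ 0 = tp y) :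
    ∃ Γ : C(unitInterval, Fin n → ℝ), (∀ t, tp (Γ t) = γ t) ∧ Γ 0 = y := by
  have : ∀ i, ∃ Γ : C(unitInterval, ℝ), (fun x : ℝ => (x : AddCircle (1:ℝ))) ∘ Γ = (fun t => γ t i) ∧ Γ 0 = y i := by
    intro i
    exact (AddCircle.isCoveringMap_coe (1:ℝ)).exists_path_lifts
      ⟨fun t => γ t i, (continuous_apply i).comp γ.continuous⟩ (y i) (congrFun h i)
  choose Γ hΓ hΓ0 using this
  refine ⟨⟨fun t i => Γ i t, by fun_prop⟩, ?_, funext hΓ0⟩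
  intro t
  ext i
  exact congrFun (hΓ i) t

lemma tp_null {n : ℕ} {M : Type} [TopologicalSpace M] (e : M ≃ₜ Torus n) (Γ : C(unitInterval, Fin n → ℝ))
    {x : M} (γ : Path x x) (hγ : ∀ t, γ t = e.symm (tp (Γ t))) (hh : γ.Homotopic (Path.refl x)) :
    Γ 1 = Γ 0 := by
  ext i
  let pr : C(M, AddCircle (1:ℝ)) := ⟨fun m => e m i, (continuous_apply i).comp e.continuous⟩
  obtain ⟨H⟩ := hh
  have cov := AddCircle.isCoveringMap_coe (1:ℝ)
  have hx : e x i = (Γ 0 i : AddCircle (1:ℝ)) := by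
    have := hγ 0
    rw [γ.source] at this
    rw [this]; simp [tp]
  have hrel : ContinuousMap.HomotopicRel ((γ.map pr.continuous).toContinuousMap)
      (((Path.refl x).map pr.continuous).toContinuousMap) {0, 1} := ⟨H.map pr⟩
  have h0 : (γ.map pr.continuous).toContinuousMap 0 = ((Γ 0 i : ℝ) : AddCircle (1:ℝ)) := by
    rw [← hx]; simp [pr]
  have h1 : ((Path.refl x).map pr.continuous).toContinuousMap 0 = ((Γ 0 i : ℝ) : AddCircle (1:ℝ)) := by
    rw [← hx]; simp [pr]
  have key := cov.liftPath_apply_one_eq_of_homotopicRel hrel (Γ 0 i) h0 h1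
  have e1 : (⟨fun t => Γ t i, (continuous_apply i).comp Γ.continuous⟩ : C(unitInterval, ℝ)) = cov.liftPath _ _ h0 := by
    rw [cov.eq_liftPath_iff']
    refine ⟨?_, rfl⟩
    ext t
    change ((Γ t i : ℝ) : AddCircle (1:ℝ)) = e (γ t) i
    rw [hγ]; simp [tp]
  have e2 : (⟨fun _ => Γ 0 i, continuous_const⟩ : C(unitInterval, ℝ)) = cov.liftPath _ _ h1 := by
    rw [cov.eq_liftPath_iff']
    refine ⟨?_, rfl⟩
    ext t
    change ((Γ 0 i : ℝ) : AddCircle (1:ℝ)) = e x i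
    rw [hx]
  rw [← e1, ← e2] at key
  exact key

/-- `y` and `y'` are joined by a path upstairs whose image has length less than `L`. -/
def Near {n : ℕ} {M : Type} [PseudoEMetricSpace M] (e : M ≃ₜ Torus n) (L : ℝ≥0∞) (y y' : Fin n → ℝ) : Prop :=
  ∃ Γ : Path y y', pathLength (Γ.map (e.symm.continuous.comp tp_continuous)) < L

section near
variable {n : ℕ} {M : Type} [MetricSpace M] (e : M ≃ₜ Torus n)

lemma Near.symm {L : ℝ≥0∞} {y y' : Fin n → ℝ} (h : Near e L y y') : Near e L y' y := by
  obtain ⟨Γ, h⟩ := h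
  refine ⟨Γ.symm, ?_⟩
  have h2 := lt_of_le_of_lt (pathLength_symm _) h
  rw [Path.map_symm] at h2
  exact h2

lemma Near.trans {L L' : ℝ≥0∞} {y y' y'' : Fin n → ℝ} (h : Near e L y y') (h' : Near e L' y' y'') :
    Near e (L + L') y y'' := by
  obtain ⟨Γ, h⟩ := h
  obtain ⟨Γ', h'⟩ := h'
  refine ⟨Γ.trans Γ', ?_⟩
  rw [Path.map_trans]
  exact lt_of_le_of_lt (pathLength_trans _ _) (ENNReal.add_lt_add h h')

lemma Near.shift {L : ℝ≥0∞} {y y' : Fin n → ℝ} (h : Near e L y y') (v : Fin n → ℤ) :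
    Near e L (y + zc v) (y' + zc v) := by
  obtain ⟨Γ, h⟩ := h
  refine ⟨Γ.map (f := fun z => z + zc v) (by fun_prop), ?_⟩
  convert h using 1
  unfold pathLength
  congr 1
  ext t
  simp [tp_add]

lemma Near.loop {L : ℝ≥0∞} {y : Fin n → ℝ} {v : Fin n → ℤ} (hL : L ≤ systole M)
    (h : Near e L y (y + zc v)) : v = 0 := by
  obtain ⟨Γ, h⟩ := h
  let x : M := e.symm (tp y)
  let γ : Path x x := (Γ.map (e.symm.continuous.comp tp_continuous)).cast rfl (by simp [x, tp_add])
  have hl : pathLength γ < L := h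
  have hh : γ.Homotopic (Path.refl x) := by
    by_contra hcon
    have : systole M ≤ pathLength γ := iInf_le_of_le x (iInf₂_le γ hcon)
    exact absurd (hl.trans_le (hL.trans this)) (lt_irrefl _)
  have := tp_null e Γ.toContinuousMap γ (fun t => rfl) hh
  have h2 : y + zc v = y := by simpa using this
  have h3 : zc v = 0 := by simpa using h2
  ext i
  have := congrFun h3 i
  simpa [zc] using this

lemma exists_short_path (hM : IsLengthMetric M) {a b : M} {L : ℝ} (h : dist a b < L) :
    ∃ γ : Path a b, pathLength γ < ENNReal.ofReal L := by
  have h1 : edist a b < ENNReal.ofReal L := by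
    rw [edist_dist]
    exact (ENNReal.ofReal_lt_ofReal_iff (dist_nonneg.trans_lt h)).2 h
  rw [hM a b, iInf_lt_iff] at h1
  exact h1

lemma path_lift {y y' : Fin n → ℝ} (γ : Path (e.symm (tp y)) (e.symm (tp y'))) :
    ∃ (v : Fin n → ℤ) (Γ : Path y (y' + zc v)), ∀ t, e.symm (tp (Γ t)) = γ t := by
  obtain ⟨Γ, h1, h2⟩ := tp_lift (⟨fun t => e (γ t), e.continuous.comp γ.continuous⟩ : C(unitInterval, Torus n)) y
    (by simp)
  have h3 : tp (Γ 1) = tp y' := by rw [h1]; simp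
  obtain ⟨v, hv⟩ := tp_eq_iff h3
  refine ⟨v, ⟨Γ, h2, hv⟩, fun t => ?_⟩
  change e.symm (tp (Γ t)) = γ t
  rw [h1]; simp

lemma exists_near (hM : IsLengthMetric M) {y y' : Fin n → ℝ} {L : ℝ}
    (h : dist (e.symm (tp y)) (e.symm (tp y')) < L) : ∃ v, Near e (ENNReal.ofReal L) y (y' + zc v) := by
  obtain ⟨γ, hγ⟩ := exists_short_path hM h
  obtain ⟨v, Γ, hΓ⟩ := path_lift e γ
  refine ⟨v, Γ, ?_⟩
  convert hγ using 1
  unfold pathLength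
  congr 1
  ext t
  exact hΓ t

lemma near_local (hM : IsLengthMetric M) (y : Fin n → ℝ) {η : ℝ} (hη : 0 < η) :
    ∀ᶠ y' in nhds y, Near e (ENNReal.ofReal η) y y' := by
  let N : Set M := e ⁻¹' (ball (tp y) (1/4))
  have hN : N ∈ nhds (e.symm (tp y)) := by
    apply (isOpen_ball.preimage e.continuous).mem_nhds
    simp
  obtain ⟨ρ, hρ, hρN⟩ := Metric.mem_nhds_iff.1 hN
  have c : Continuous fun y' : Fin n → ℝ => e.symm (tp y') := e.symm.continuous.comp tp_continuous
  have h1 : ∀ᶠ y' in nhds y, dist (e.symm (tp y')) (e.symm (tp y)) < min ρ η :=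
    c.continuousAt.eventually (ball_mem_nhds _ (lt_min hρ hη))
  filter_upwards [h1, ball_mem_nhds y (show (0:ℝ) < 1/4 by norm_num)] with y' hy' hyb
  rw [dist_comm] at hy'
  obtain ⟨γ, hγ⟩ := exists_short_path hM hy'
  obtain ⟨v, Γ, hΓ⟩ := path_lift e γ
  have hin : ∀ t, dist (tp (Γ t)) (tp y) < 1/4 := by
    intro t
    have h2 : γ t ∈ N := by
      apply hρN
      rw [mem_ball]
      have h3 : edist (γ t) (γ 0) ≤ pathLength γ := eVariationOn.edist_le _ (mem_univ _) (mem_univ _)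
      have h4 := h3.trans_lt hγ
      rw [γ.source, edist_dist, ENNReal.ofReal_lt_ofReal_iff (lt_min hρ hη)] at h4
      exact h4.trans_le (min_le_left _ _)
    have h5 : dist (e (γ t)) (tp y) < 1/4 := h2
    rw [← hΓ] at h5
    simpa using h5
  have hlt : ∀ t i, |Γ t i - y i| < 1/4 := by
    intro t i
    by_contra hcon
    push Not at hcon
    have hc : Continuous fun t => |Γ t i - y i| :=
      (((continuous_apply i).comp Γ.continuous).sub continuous_const).abs
    have := intermediate_value_univ 0 t hc
    obtain ⟨t', ht'⟩ := this (show (1/4 : ℝ) ∈ _ from ⟨by simp, hcon⟩)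
    have h6 := (dist_le_pi_dist (tp (Γ t')) (tp y) i).trans_lt (hin t')
    rw [dist_eq_norm] at h6
    simp only [tp] at h6
    rw [← AddCircle.coe_sub] at h6
    dsimp only at ht'
    rw [(AddCircle.norm_coe_eq_abs_iff (1:ℝ) one_ne_zero).2 (by rw [ht']; norm_num), ht'] at h6
    exact lt_irrefl _ h6
  have hv : v = 0 := by
    ext i
    have h7 := hlt 1 i
    rw [Γ.target] at h7
    have h8 := (dist_le_pi_dist y' y i).trans_lt hyb
    rw [Real.dist_eq] at h8
    simp only [Pi.add_apply, zc] at h7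
    rw [abs_lt] at h7 h8
    have h9 : (v i : ℝ) < 1 := by linarith [h7.2, h8.1]
    have h10 : (-1 : ℝ) < v i := by linarith [h7.1, h8.2]
    have h11 : v i < 1 := by exact_mod_cast h9
    have h12 : -1 < v i := by exact_mod_cast h10
    simp only [Pi.zero_apply]
    omega
  subst hv
  refine ⟨Γ.cast rfl (by ext i; simp [zc]), ?_⟩
  have : pathLength ((Γ.cast rfl (by ext i; simp [zc]) : Path y y').map (e.symm.continuous.comp tp_continuous)) = pathLength γ := by
    unfold pathLength
    congr 1
    ext t
    exact hΓ t
  rw [this]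
  exact hγ.trans_le (ENNReal.ofReal_le_ofReal (min_le_right _ _))

lemma Near.mono {L L' : ℝ≥0∞} {y y' : Fin n → ℝ} (h : Near e L y y') (hL : L ≤ L') : Near e L' y y' := by
  obtain ⟨Γ, h⟩ := h
  exact ⟨Γ, h.trans_le hL⟩

lemma near_unique {L : ℝ≥0∞} {a b : Fin n → ℝ} {v w : Fin n → ℤ} (hL : L + L ≤ systole M)
    (h1 : Near e L a (b + zc v)) (h2 : Near e L a (b + zc w)) : v = w := by
  have h3 := Near.trans e (Near.symm e h1) h2
  have h4 : b + zc w = (b + zc v) + zc (w - v) := by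
    ext i; simp [zc]
  rw [h4] at h3
  have := Near.loop e hL h3
  exact (sub_eq_zero.1 this).symm

end near

lemma no_small_cover {n : ℕ} {M : Type} [MetricSpace M] (e : M ≃ₜ Torus n) (hM : IsLengthMetric M) (r : ℝ) (hr : 0 < r)
    (hsys : ENNReal.ofReal (8 * r) ≤ systole M) (V : Fin n → Set (Set M))
    (hV1 : ∀ k, ∀ U ∈ V k, IsOpen U ∧ ∀ x ∈ U, ∀ y ∈ U, dist x y ≤ 3 * r)
    (hV2 : ∀ k, (V k).PairwiseDisjoint id) (hV3 : ∀ x, ∃ k, ∃ U ∈ V k, x ∈ U) : False := by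
  classical
  let q : (Fin n → ℝ) → M := fun y => e.symm (tp y)
  have hq : Continuous q := e.symm.continuous.comp tp_continuous
  have hqs : Function.Surjective q := by
    intro x
    obtain ⟨y, hy⟩ := tp_surj (e x)
    exact ⟨y, by simp [q, hy]⟩
  have hb : ∀ U : Set M, ∃ y, U.Nonempty → q y ∈ U := by
    intro U
    by_cases h : U.Nonempty
    · obtain ⟨x, hx⟩ := h
      obtain ⟨y, rfl⟩ := hqs x
      exact ⟨y, fun _ => hx⟩
    · exact ⟨0, fun h' => (h h').elim⟩
  choose base hbase using hb
  have huniq : ∀ k, ∀ U ∈ V k, ∀ U' ∈ V k, ∀ x, x ∈ U → x ∈ U' → U = U' := by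
    intro k U hU U' hU' x hx hx'
    by_contra hne
    exact Set.disjoint_left.1 (hV2 k hU hU' hne) hx hx'
  have hs : ∀ k y, ∃ v : Fin n → ℤ, ∀ U ∈ V k, q y ∈ U →
      Near e (ENNReal.ofReal (7/2 * r)) y (base U + zc v) := by
    intro k y
    by_cases h : ∃ U ∈ V k, q y ∈ U
    · obtain ⟨U, hU, hy⟩ := h
      have hd := (hV1 k U hU).2 _ hy _ (hbase U ⟨_, hy⟩)
      obtain ⟨v, hv⟩ := exists_near e hM (y := y) (y' := base U) (L := 7/2 * r) (lt_of_le_of_lt hd (by linarith))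
      refine ⟨v, fun U' hU' hy' => ?_⟩
      rw [huniq k U' hU' U hU _ hy' hy]
      exact hv
    · push Not at h
      exact ⟨0, fun U hU hy => (h U hU hy).elim⟩
  choose s hs using hs
  have hsys' : ENNReal.ofReal (4 * r) + ENNReal.ofReal (4 * r) ≤ systole M := by
    rw [← ENNReal.ofReal_add (by positivity) (by positivity)]
    convert hsys using 2; ring
  have hle : ENNReal.ofReal (7/2 * r) ≤ ENNReal.ofReal (4 * r) :=
    ENNReal.ofReal_le_ofReal (by linarith)
  have hmemO : ∀ k y, tp y ∈ e.symm ⁻¹' (⋃₀ V k) → ∃ U ∈ V k, q y ∈ U := fun k y h => h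
  refine no_cover (fun k => e.symm ⁻¹' (⋃₀ V k)) ?_ ?_ s ?_ ?_
  · intro k
    exact (isOpen_sUnion fun U hU => (hV1 k U hU).1).preimage e.symm.continuous
  · rw [eq_univ_iff_forall]
    intro z
    obtain ⟨k, U, hU, hz⟩ := hV3 (e.symm z)
    exact mem_iUnion.2 ⟨k, U, hU, hz⟩
  · intro k y v hy
    obtain ⟨U, hU, hyU⟩ := hmemO k y hy
    have h1 := Near.shift e (hs k y U hU hyU) v
    have hq' : q (y + zc v) = q y := by simp only [q, tp_add]
    have h2 := hs k (y + zc v) U hU (by rw [hq']; exact hyU)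
    have h3 : base U + zc (s k y) + zc v = base U + zc (s k y + v) := by
      ext i; simp [zc, add_assoc]
    rw [h3] at h1
    exact near_unique e hsys' (Near.mono e h2 hle) (Near.mono e h1 hle)
  · intro k y hy
    obtain ⟨U, hU, hyU⟩ := hmemO k y hy
    have h1 := hs k y U hU hyU
    filter_upwards [near_local e hM y (show 0 < 1/2 * r by positivity),
      hq.continuousAt.eventually ((hV1 k U hU).1.mem_nhds hyU)] with y' hn hyU'
    have h2 := hs k y' U hU hyU'
    have h3 := Near.trans e (Near.symm e hn) h1
    rw [← ENNReal.ofReal_add (by positivity) (by positivity)] at h3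
    have e1 : 1/2 * r + 7/2 * r = 4 * r := by ring
    rw [e1] at h3
    exact near_unique e hsys' (Near.mono e h2 hle) h3

theorem torus_ball_volume (n : ℕ) (hn : 0 < n) :
    ∃ c : ℝ, 0 < c ∧
      ∀ (M : Type) [MetricSpace M] [MeasurableSpace M] [BorelSpace M],
        Nonempty (M ≃ₜ Torus n) → IsLengthMetric M →
        ∀ R : ℝ, 0 < R → ENNReal.ofReal (2 * R) < systole M →
          ∃ x : M, ENNReal.ofReal (c * R ^ n) ≤ rvol n (Metric.ball x R) := by
  obtain ⟨ε, hε, hcov⟩ := cover_thm n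
  set ω : ℝ := Real.pi ^ ((n : ℝ) / 2) / Real.Gamma ((n : ℝ) / 2 + 1) with hω
  have hω0 : 0 < ω := by
    have : 0 < Real.Gamma ((n : ℝ) / 2 + 1) := Real.Gamma_pos_of_pos (by positivity)
    positivity
  refine ⟨ω / 2 ^ n * (ε / 4 ^ n), by positivity, ?_⟩
  intro M _ _ _ ⟨e⟩ hM R hR hsys
  by_contra hcon
  push Not at hcon
  have : CompactSpace M := e.symm.compactSpace
  have hunit : unitBallVolume n / 2 ^ n = ENNReal.ofReal (ω / 2 ^ n) := by
    have h0 : ENNReal.ofReal (ω / 2 ^ n) = ENNReal.ofReal ω / ENNReal.ofReal (2 ^ n) :=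
      ENNReal.ofReal_div_of_pos (by positivity)
    have h1 : unitBallVolume n = ENNReal.ofReal ω := rfl
    rw [h1, h0, ENNReal.ofReal_pow (by norm_num)]
    simp
  obtain ⟨V, hV1, hV2, hV3⟩ := hcov M univ (R/4) (by linarith) isCompact_univ (by
    intro x
    have h1 := (hcon x).le
    rw [rvol, hunit, mul_assoc, ENNReal.ofReal_mul (by positivity)] at h1
    have h2 := (ENNReal.mul_le_mul_iff_right (by simpa using (by positivity : 0 < ω / 2 ^ n)) ENNReal.ofReal_ne_top).1 h1
    rw [univ_inter]
    refine (measure_mono (ball_subset_ball (by linarith))).trans (h2.trans (le_of_eq ?_))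
    congr 1
    rw [div_pow]; ring)
  refine no_small_cover e hM (R/4) (by linarith) ?_ V hV1 hV2 ?_
  · have h8 : 8 * (R / 4) = 2 * R := by ring
    rw [h8]
    exact hsys.le
  · intro x
    obtain ⟨k, U, hU, hx⟩ := mem_iUnion.1 (hV3 (mem_univ x))
    exact ⟨k, U, hU, hx⟩

end
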